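/- arXiv:1812.03031 — 2 statements merged into one kernel-verified Lean document; each statement's English description precedes it below -/
import Mathlib

section
/- Let X, Y be discrete random variables, let U be a random variable with values in a discrete set 𝒰 that is independent of the pair (X, Y), and let f : 𝒴 × 𝒰 → {1,...,M}. Then there exists u ∈ 𝒰 such that I(X; f(Y, u)) ≥ I(X; f(Y, U)); consequently, randomized quantizers cannot outperform the best deterministic quantizer: I(X; f(Y,U)) ≤ I(X;[Y]_M). -/
/-!
Write `W_u` for the joint pmf of `(X, f(Y, u))` and `W` for that of `(X, f(Y, U))`. By independence
`W = ∑ u, μ u • W_u`, and all these pmfs have the same `X`-marginal. Let `i_W` be the information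
density of `W`, so that `I(W)` is the mean of `i_W` under `W`, which is the `μ`-average over `u` of
its means under `W_u`. Hence for some `u` with `μ u > 0` the mean of `i_W` under `W_u` is at least
`I(W)`. The tangent inequality `1 - 1/t ≤ log t` shows that this mean is at most `I(W_u)`: the two
pmfs share the `X`-marginal, so the linear corrections sum to `0`.

The quantizer has finitely many levels, so information densities are integrable and
`I(X; f(Y)) ≤ H(f(Y))` is bounded uniformly over quantizers.
-/

open scoped BigOperators

/-- Mutual information (in bits) of a joint probability mass function `p` on `𝒳 × 𝒴`,
with the convention `0 · log 0 = 0`. -/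
noncomputable def miBits {𝒳 𝒴 : Type*} (p : 𝒳 → 𝒴 → ℝ) : ℝ :=
  ∑' x, ∑' y, p x y * Real.logb 2 (p x y / ((∑' y', p x y') * (∑' x', p x' y)))

/-- `p` is a joint probability mass function. -/
def IsJointPMF {𝒳 𝒴 : Type*} (p : 𝒳 → 𝒴 → ℝ) : Prop :=
  (∀ x y, 0 ≤ p x y) ∧ Summable (fun xy : 𝒳 × 𝒴 => p xy.1 xy.2) ∧ (∑' x, ∑' y, p x y) = 1

/-- Joint pmf of `(X, f(Y))` when `(X,Y) ~ p` and `f` is a deterministic `M`-level quantizer. -/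
noncomputable def quantJoint {𝒳 𝒴 : Type*} (p : 𝒳 → 𝒴 → ℝ) {M : ℕ} (f : 𝒴 → Fin M) :
    𝒳 → Fin M → ℝ :=
  fun x m => ∑' y, if f y = m then p x y else 0

/-- `I(X;[Y]_M)`: the best mutual information achievable by a deterministic `M`-level
quantizer of `Y`. -/
noncomputable def quantMI {𝒳 𝒴 : Type*} (p : 𝒳 → 𝒴 → ℝ) (M : ℕ) : ℝ :=
  ⨆ f : 𝒴 → Fin M, miBits (quantJoint p f)

/-- The information distillation function `ID_M(K, β)`. -/
noncomputable def ID (M K : ℕ) (β : ℝ) : ℝ :=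
  sInf {v | ∃ p : Fin K → ℕ → ℝ, IsJointPMF p ∧ β ≤ miBits p ∧ v = quantMI p M}

/-- Binary entropy function (bits). -/
noncomputable def hBin (t : ℝ) : ℝ :=
  -(t * Real.logb 2 t) - (1 - t) * Real.logb 2 (1 - t)

open Real

section Summation

variable {α β : Type*}

lemma hasSum_prod_of_nonneg {f : α × β → ℝ} {g : α → ℝ} {s : ℝ} (hf : ∀ z, 0 ≤ f z)
    (hrow : ∀ a, HasSum (fun b => f (a, b)) (g a)) (hg : HasSum g s) : HasSum f s := by
  have hsum : Summable f := (summable_prod_of_nonneg hf).2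
    ⟨fun a => (hrow a).summable, hg.summable.congr fun a => (hrow a).tsum_eq.symm⟩
  exact (hsum.hasSum.prod_fiberwise hrow).unique hg ▸ hsum.hasSum

lemma summable_prod_mul_of_hasSum {k : α → β → ℝ} {W g : β → ℝ} (hk : ∀ a b, 0 ≤ k a b)
    (hW : ∀ b, HasSum (fun a => k a b) (W b)) (hg : Summable fun b => W b * g b) :
    Summable fun z : α × β => k z.1 z.2 * g z.2 := by
  have hW0 (b : β) : 0 ≤ W b := (hW b).nonneg fun a => hk a b
  have habs : Summable fun z : β × α => k z.2 z.1 * |g z.1| := by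
    refine (hasSum_prod_of_nonneg (fun z => mul_nonneg (hk _ _) (abs_nonneg _))
      (fun b => (hW b).mul_right |g b|) (Summable.hasSum ?_)).summable
    exact hg.abs.congr fun b => by rw [abs_mul, abs_of_nonneg (hW0 b)]
  refine Summable.of_norm (habs.prod_symm.congr fun z => ?_)
  rw [norm_eq_abs, abs_mul, abs_of_nonneg (hk _ _)]
  rfl

lemma hasSum_tsum_mul_of_hasSum {k : α → β → ℝ} {W g : β → ℝ} (hk : ∀ a b, 0 ≤ k a b)
    (hW : ∀ b, HasSum (fun a => k a b) (W b)) (hg : Summable fun b => W b * g b) :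
    HasSum (fun a => ∑' b, k a b * g b) (∑' b, W b * g b) := by
  have hsum := summable_prod_mul_of_hasSum hk hW hg
  have hcols : ∑' z : β × α, k z.2 z.1 * g z.1 = ∑' b, W b * g b := by
    rw [Summable.tsum_prod (f := fun z : β × α => k z.2 z.1 * g z.1) hsum.prod_symm]
    exact tsum_congr fun b => ((hW b).mul_right (g b)).tsum_eq
  rw [← hcols, ← (Equiv.prodComm α β).tsum_eq]
  exact hsum.hasSum.prod_fiberwise fun a => (hsum.prod_factor a).hasSum

lemma exists_pos_and_le_of_hasSum_mul {μ d : α → ℝ} {s : ℝ} (hμ0 : ∀ a, 0 ≤ μ a)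
    (hμ : HasSum μ 1) (hd : HasSum (fun a => μ a * d a) s) : ∃ a, 0 < μ a ∧ s ≤ d a := by
  by_contra! hlt
  have hs : HasSum (fun a => μ a * s) s := by simpa only [one_mul] using hμ.mul_right s
  have hle (a : α) : μ a * d a ≤ μ a * s := by
    rcases (hμ0 a).eq_or_lt with h0 | hpos
    · simp only [← h0, zero_mul, le_refl]
    · exact mul_le_mul_of_nonneg_left (hlt a hpos).le hpos.le
  obtain ⟨a, ha⟩ : ∃ a, 0 < μ a := by
    by_contra! hnonpos
    exact one_ne_zero (hμ.unique (hasSum_zero.congr_fun fun a => (hnonpos a).antisymm (hμ0 a)))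
  exact lt_irrefl s (hasSum_lt hle (mul_lt_mul_of_pos_left (hlt a ha) ha) hd hs)

end Summation

section InformationDensity

lemma negMulLog_le_one {t : ℝ} (ht : 0 ≤ t) : negMulLog t ≤ 1 :=
  (negMulLog_le_one_sub_self ht).trans (sub_le_self 1 ht)

variable {𝒳 𝒴 : Type*}

/-- The pmf of `X` when `(X, Y) ~ p`. -/
noncomputable def fstMarginal (p : 𝒳 → 𝒴 → ℝ) (x : 𝒳) : ℝ := ∑' y, p x y

/-- The pmf of `Y` when `(X, Y) ~ p`. -/
noncomputable def sndMarginal (p : 𝒳 → 𝒴 → ℝ) (y : 𝒴) : ℝ := ∑' x, p x y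

/-- The information density `log₂ (p(x, y) / (p(x) p(y)))`, whose mean is the mutual information.
It takes the junk value `0` where `p x y = 0`. -/
noncomputable def infoDensity (p : 𝒳 → 𝒴 → ℝ) (x : 𝒳) (y : 𝒴) : ℝ :=
  logb 2 (p x y / (fstMarginal p x * sndMarginal p y))

lemma miBits_eq_tsum_prod {p : 𝒳 → 𝒴 → ℝ}
    (hs : Summable fun z : 𝒳 × 𝒴 => p z.1 z.2 * infoDensity p z.1 z.2) :
    miBits p = ∑' z : 𝒳 × 𝒴, p z.1 z.2 * infoDensity p z.1 z.2 :=
  hs.tsum_prod.symm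

namespace IsJointPMF

variable {p q : 𝒳 → 𝒴 → ℝ}

lemma of_hasSum {a : 𝒳 → ℝ} (hp0 : ∀ x y, 0 ≤ p x y) (hrow : ∀ x, HasSum (p x) (a x))
    (ha : HasSum a 1) : IsJointPMF p := by
  refine ⟨hp0, (hasSum_prod_of_nonneg (fun z => hp0 z.1 z.2) hrow ha).summable, ?_⟩
  simpa only [(hrow _).tsum_eq] using ha.tsum_eq

lemma hasSum_row (hp : IsJointPMF p) (x : 𝒳) : HasSum (p x) (fstMarginal p x) :=
  (hp.2.1.prod_factor x).hasSum

lemma hasSum_col (hp : IsJointPMF p) (y : 𝒴) : HasSum (fun x => p x y) (sndMarginal p y) :=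
  (hp.2.1.prod_symm.prod_factor y).hasSum

lemma hasSum_fstMarginal (hp : IsJointPMF p) : HasSum (fstMarginal p) 1 :=
  hp.2.2 ▸ hp.2.1.prod.hasSum

lemma hasSum_one (hp : IsJointPMF p) : HasSum (fun z : 𝒳 × 𝒴 => p z.1 z.2) 1 :=
  hasSum_prod_of_nonneg (fun z => hp.1 z.1 z.2) hp.hasSum_row hp.hasSum_fstMarginal

lemma hasSum_sndMarginal (hp : IsJointPMF p) : HasSum (sndMarginal p) 1 :=
  ((Equiv.prodComm 𝒴 𝒳).hasSum_iff.2 hp.hasSum_one).prod_fiberwise hp.hasSum_col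

lemma fstMarginal_nonneg (hp : IsJointPMF p) (x : 𝒳) : 0 ≤ fstMarginal p x :=
  tsum_nonneg (hp.1 x)

lemma sndMarginal_nonneg (hp : IsJointPMF p) (y : 𝒴) : 0 ≤ sndMarginal p y :=
  tsum_nonneg fun x => hp.1 x y

lemma sndMarginal_le_one (hp : IsJointPMF p) (y : 𝒴) : sndMarginal p y ≤ 1 :=
  le_hasSum hp.hasSum_sndMarginal y fun z _ => hp.sndMarginal_nonneg z

lemma le_fstMarginal (hp : IsJointPMF p) (x : 𝒳) (y : 𝒴) : p x y ≤ fstMarginal p x :=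
  le_hasSum (hp.hasSum_row x) y fun z _ => hp.1 x z

lemma le_sndMarginal (hp : IsJointPMF p) (x : 𝒳) (y : 𝒴) : p x y ≤ sndMarginal p y :=
  le_hasSum (hp.hasSum_col y) x fun z _ => hp.1 z y

lemma hasSum_mul_comp_snd (hp : IsJointPMF p) {φ : 𝒴 → ℝ} {s : ℝ} (hφ : ∀ y, 0 ≤ φ y)
    (hs : HasSum (fun y => sndMarginal p y * φ y) s) :
    HasSum (fun z : 𝒳 × 𝒴 => p z.1 z.2 * φ z.2) s := by
  refine (Equiv.prodComm 𝒴 𝒳).hasSum_iff.1 (hasSum_prod_of_nonneg ?_ ?_ hs)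
  · exact fun z => mul_nonneg (hp.1 z.2 z.1) (hφ z.1)
  · exact fun y => (hp.hasSum_col y).mul_right (φ y)

lemma sndMarginal_eq_zero_of_absolutelyContinuous (hq : IsJointPMF q)
    (hpq : ∀ x y, q x y = 0 → p x y = 0) {y : 𝒴} (hy : sndMarginal q y = 0) :
    sndMarginal p y = 0 := by
  have hcol (x : 𝒳) : p x y = 0 := hpq x y ((hy ▸ hq.le_sndMarginal x y).antisymm (hq.1 x y))
  simp only [sndMarginal, hcol, tsum_zero]

lemma hasSum_mul_sndMarginal_div (hp : IsJointPMF p) (hq : IsJointPMF q)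
    (hpq : ∀ x y, q x y = 0 → p x y = 0) :
    HasSum (fun z : 𝒳 × 𝒴 => q z.1 z.2 * (sndMarginal p z.2 / sndMarginal q z.2)) 1 := by
  refine hq.hasSum_mul_comp_snd (φ := fun y => sndMarginal p y / sndMarginal q y)
    (fun y => div_nonneg (hp.sndMarginal_nonneg y) (hq.sndMarginal_nonneg y)) ?_
  simpa only [mul_div_cancel_of_imp' (sndMarginal_eq_zero_of_absolutelyContinuous hq hpq)]
    using hp.hasSum_sndMarginal

lemma mul_infoDensity_add_le (hp : IsJointPMF p) (hq : IsJointPMF q)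
    (hmarg : fstMarginal p = fstMarginal q) (hpq : ∀ x y, q x y = 0 → p x y = 0) (x : 𝒳) (y : 𝒴) :
    p x y * infoDensity q x y
        + (p x y - q x y * (sndMarginal p y / sndMarginal q y)) / log 2 ≤
      p x y * infoDensity p x y := by
  rcases (hp.1 x y).eq_or_lt with h0 | hpos
  · have hcorr : 0 ≤ q x y * (sndMarginal p y / sndMarginal q y) / log 2 := by
      have := hq.1 x y
      have := hp.sndMarginal_nonneg y
      have := hq.sndMarginal_nonneg y
      positivity
    simpa only [← h0, zero_mul, zero_add, zero_sub, neg_div, neg_nonpos] using hcorr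
  have ha : 0 < fstMarginal q x := hmarg ▸ hpos.trans_le (hp.le_fstMarginal x y)
  have hr : 0 < sndMarginal p y := hpos.trans_le (hp.le_sndMarginal x y)
  have hqpos : 0 < q x y := (hq.1 x y).lt_of_ne' fun h => hpos.ne' (hpq x y h)
  have hs : 0 < sndMarginal q y := hqpos.trans_le (hq.le_sndMarginal x y)
  simp only [infoDensity, hmarg, logb]
  set P := p x y / (fstMarginal q x * sndMarginal p y) with hP
  set Q := q x y / (fstMarginal q x * sndMarginal q y) with hQ
  have htangent : 1 - (P / Q)⁻¹ ≤ log P - log Q := by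
    rw [← log_div (by positivity) (by positivity)]
    exact one_sub_inv_le_log_of_pos (by positivity)
  have hcorr : p x y * (1 - (P / Q)⁻¹) = p x y - q x y * (sndMarginal p y / sndMarginal q y) := by
    rw [hP, hQ]
    field_simp
  rw [← hcorr, ← mul_div_assoc, ← mul_div_assoc, ← add_div, ← mul_add]
  gcongr
  linarith

lemma tsum_mul_infoDensity_le_miBits (hp : IsJointPMF p) (hq : IsJointPMF q)
    (hmarg : fstMarginal p = fstMarginal q) (hpq : ∀ x y, q x y = 0 → p x y = 0)
    (hsp : Summable fun z : 𝒳 × 𝒴 => p z.1 z.2 * infoDensity p z.1 z.2)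
    (hsq : Summable fun z : 𝒳 × 𝒴 => p z.1 z.2 * infoDensity q z.1 z.2) :
    ∑' z : 𝒳 × 𝒴, p z.1 z.2 * infoDensity q z.1 z.2 ≤ miBits p := by
  have hcorr : HasSum (fun z : 𝒳 × 𝒴 =>
      (p z.1 z.2 - q z.1 z.2 * (sndMarginal p z.2 / sndMarginal q z.2)) / log 2) 0 := by
    have hdiff := (hp.hasSum_one.sub (hp.hasSum_mul_sndMarginal_div hq hpq)).div_const (log 2)
    rwa [sub_self, zero_div] at hdiff
  rw [miBits_eq_tsum_prod hsp]
  calc ∑' z : 𝒳 × 𝒴, p z.1 z.2 * infoDensity q z.1 z.2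
      = ∑' z : 𝒳 × 𝒴, (p z.1 z.2 * infoDensity q z.1 z.2
          + (p z.1 z.2 - q z.1 z.2 * (sndMarginal p z.2 / sndMarginal q z.2)) / log 2) := by
        rw [hsq.tsum_add hcorr.summable, hcorr.tsum_eq, add_zero]
    _ ≤ ∑' z : 𝒳 × 𝒴, p z.1 z.2 * infoDensity p z.1 z.2 :=
        (hsq.add hcorr.summable).tsum_le_tsum
          (fun z => hp.mul_infoDensity_add_le hq hmarg hpq z.1 z.2) hsp

lemma exists_miBits_le_of_mixture {𝒰 : Type*} {μ : 𝒰 → ℝ} (hμ0 : ∀ u, 0 ≤ μ u)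
    (hμ : HasSum μ 1) {K : 𝒰 → 𝒳 → 𝒴 → ℝ} (hK : ∀ u, IsJointPMF (K u)) (hq : IsJointPMF q)
    (hmarg : ∀ u, fstMarginal (K u) = fstMarginal q)
    (hmix : ∀ x y, HasSum (fun u => μ u * K u x y) (q x y))
    (hsK : ∀ u, Summable fun z : 𝒳 × 𝒴 => K u z.1 z.2 * infoDensity (K u) z.1 z.2)
    (hsq : Summable fun z : 𝒳 × 𝒴 => q z.1 z.2 * infoDensity q z.1 z.2) :
    ∃ u, miBits q ≤ miBits (K u) := by
  have hk0 (u : 𝒰) (z : 𝒳 × 𝒴) : 0 ≤ μ u * K u z.1 z.2 := mul_nonneg (hμ0 u) ((hK u).1 z.1 z.2)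
  have hmean : HasSum (fun u => μ u * ∑' z : 𝒳 × 𝒴, K u z.1 z.2 * infoDensity q z.1 z.2)
      (miBits q) := by
    simpa only [mul_assoc, tsum_mul_left, ← miBits_eq_tsum_prod hsq] using
      hasSum_tsum_mul_of_hasSum hk0 (fun z => hmix z.1 z.2) hsq
  obtain ⟨u, hu, hle⟩ := exists_pos_and_le_of_hasSum_mul hμ0 hμ hmean
  have hac (x : 𝒳) (y : 𝒴) (h0 : q x y = 0) : K u x y = 0 := by
    have hzero := (hasSum_zero_iff_of_nonneg fun v => hk0 v (x, y)).1 (h0 ▸ hmix x y)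
    exact (mul_eq_zero.1 (congrFun hzero u)).resolve_left hu.ne'
  have hcross : Summable fun z : 𝒳 × 𝒴 => K u z.1 z.2 * infoDensity q z.1 z.2 := by
    have hrow := (summable_prod_mul_of_hasSum hk0 (fun z => hmix z.1 z.2) hsq).prod_factor u
    simpa only [mul_assoc, summable_mul_left_iff hu.ne'] using hrow
  exact ⟨u, hle.trans ((hK u).tsum_mul_infoDensity_le_miBits hq (hmarg u) hac (hsK u) hcross)⟩

lemma mul_infoDensity_eq (hp : IsJointPMF p) (x : 𝒳) (y : 𝒴) :
    p x y * infoDensity p x y =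
      p x y * -logb 2 (sndMarginal p y)
        - fstMarginal p x * (negMulLog (p x y / fstMarginal p x) / log 2) := by
  rcases (hp.1 x y).eq_or_lt with h0 | hpos
  · simp only [← h0, zero_mul, zero_div, negMulLog_zero, mul_zero, sub_zero]
  have ha : 0 < fstMarginal p x := hpos.trans_le (hp.le_fstMarginal x y)
  have hr : 0 < sndMarginal p y := hpos.trans_le (hp.le_sndMarginal x y)
  rw [infoDensity, ← div_div, logb_div (div_pos hpos ha).ne' hr.ne', negMulLog, logb, logb]
  field_simp
  ring

lemma div_fstMarginal_mem_Icc (hp : IsJointPMF p) (x : 𝒳) (y : 𝒴) :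
    p x y / fstMarginal p x ∈ Set.Icc 0 1 :=
  ⟨div_nonneg (hp.1 x y) (hp.fstMarginal_nonneg x),
    div_le_one_of_le₀ (hp.le_fstMarginal x y) (hp.fstMarginal_nonneg x)⟩

lemma mul_infoDensity_le (hp : IsJointPMF p) (x : 𝒳) (y : 𝒴) :
    p x y * infoDensity p x y ≤ p x y * -logb 2 (sndMarginal p y) := by
  have ht := hp.div_fstMarginal_mem_Icc x y
  rw [hp.mul_infoDensity_eq]
  exact sub_le_self _ (mul_nonneg (hp.fstMarginal_nonneg x)
    (div_nonneg (negMulLog_nonneg ht.1 ht.2) (log_nonneg one_le_two)))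

lemma abs_mul_infoDensity_le (hp : IsJointPMF p) (x : 𝒳) (y : 𝒴) :
    |p x y * infoDensity p x y| ≤
      fstMarginal p x * (|logb 2 (sndMarginal p y)| + 1 / log 2) := by
  have ht := hp.div_fstMarginal_mem_Icc x y
  have hlog2 : 0 < log 2 := log_pos one_lt_two
  have ha := hp.fstMarginal_nonneg x
  rw [hp.mul_infoDensity_eq, mul_add]
  refine (abs_sub _ _).trans ?_
  rw [abs_mul, abs_neg, abs_of_nonneg (hp.1 x y), abs_mul, abs_of_nonneg ha, abs_div,
    abs_of_nonneg (negMulLog_nonneg ht.1 ht.2), abs_of_pos hlog2]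
  gcongr
  · exact hp.le_fstMarginal x y
  · exact negMulLog_le_one ht.1

lemma summable_mul_infoDensity [Finite 𝒴] (hp : IsJointPMF p) :
    Summable fun z : 𝒳 × 𝒴 => p z.1 z.2 * infoDensity p z.1 z.2 := by
  have hbound : Summable fun z : 𝒳 × 𝒴 =>
      fstMarginal p z.1 * (|logb 2 (sndMarginal p z.2)| + 1 / log 2) :=
    hp.hasSum_fstMarginal.summable.mul_of_nonneg
      (g := fun y => |logb 2 (sndMarginal p y)| + 1 / log 2) (Summable.of_finite)
      hp.fstMarginal_nonneg (fun y => by positivity)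
  exact Summable.of_norm_bounded hbound fun z => hp.abs_mul_infoDensity_le z.1 z.2

lemma miBits_le_entropy [Fintype 𝒴] (hp : IsJointPMF p) :
    miBits p ≤ ∑ y, negMulLog (sndMarginal p y) / log 2 := by
  have hentropy : HasSum (fun z : 𝒳 × 𝒴 => p z.1 z.2 * -logb 2 (sndMarginal p z.2))
      (∑ y, negMulLog (sndMarginal p y) / log 2) := by
    refine hp.hasSum_mul_comp_snd (φ := fun y => -logb 2 (sndMarginal p y)) (fun y => ?_) ?_
    · exact neg_nonneg.2
        (logb_nonpos one_lt_two (hp.sndMarginal_nonneg y) (hp.sndMarginal_le_one y))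
    · convert hasSum_fintype _ using 2 with y
      rw [negMulLog, logb]
      ring
  rw [miBits_eq_tsum_prod hp.summable_mul_infoDensity, ← hentropy.tsum_eq]
  exact hp.summable_mul_infoDensity.tsum_le_tsum (fun z => hp.mul_infoDensity_le z.1 z.2)
    hentropy.summable

end IsJointPMF

end InformationDensity

section Quantizer

variable {𝒳 𝒴 𝒰 : Type*} {p : 𝒳 → 𝒴 → ℝ} {μ : 𝒰 → ℝ} {M : ℕ}

/-- Joint pmf of `X` and the pair `(Y, U)` when `(X, Y) ~ p` and `U ~ μ` is independent of
`(X, Y)`. It makes a randomized quantizer of `Y` a deterministic quantizer of `(Y, U)`. -/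
def adjoinIndep (p : 𝒳 → 𝒴 → ℝ) (μ : 𝒰 → ℝ) : 𝒳 → 𝒴 × 𝒰 → ℝ :=
  fun x z => p x z.1 * μ z.2

namespace IsJointPMF

lemma hasSum_quantJoint (hp : IsJointPMF p) (g : 𝒴 → Fin M) (x : 𝒳) (m : Fin M) :
    HasSum (fun y => if g y = m then p x y else 0) (quantJoint p g x m) :=
  (Summable.of_nonneg_of_le (fun y => ite_nonneg (hp.1 x y) le_rfl)
    (fun y => (ite_le_sup _ _ _).trans (sup_le le_rfl (hp.1 x y)))
    (hp.hasSum_row x).summable).hasSum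

lemma hasSum_quantJoint_row (hp : IsJointPMF p) (g : 𝒴 → Fin M) (x : 𝒳) :
    HasSum (quantJoint p g x) (fstMarginal p x) := by
  have hcells := (hp.hasSum_row x).tsum_fiberwise g
  refine hcells.congr_fun fun m => ?_
  rw [tsum_subtype]
  exact tsum_congr fun y => by simp only [Set.indicator, Set.mem_preimage, Set.mem_singleton_iff]

lemma fstMarginal_quantJoint (hp : IsJointPMF p) (g : 𝒴 → Fin M) :
    fstMarginal (quantJoint p g) = fstMarginal p :=
  funext fun x => (hp.hasSum_quantJoint_row g x).tsum_eq

protected lemma quantJoint (hp : IsJointPMF p) (g : 𝒴 → Fin M) : IsJointPMF (quantJoint p g) :=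
  of_hasSum (fun x m => (hp.hasSum_quantJoint g x m).nonneg fun y => ite_nonneg (hp.1 x y) le_rfl)
    (hp.hasSum_quantJoint_row g) hp.hasSum_fstMarginal

lemma hasSum_adjoinIndep_row (hp : IsJointPMF p) (hμ0 : ∀ u, 0 ≤ μ u) (hμ : HasSum μ 1) (x : 𝒳) :
    HasSum (adjoinIndep p μ x) (fstMarginal p x) := by
  have hprod := (hp.hasSum_row x).mul hμ
    ((hp.hasSum_row x).summable.mul_of_nonneg hμ.summable (hp.1 x) hμ0)
  rwa [mul_one] at hprod

lemma fstMarginal_adjoinIndep (hp : IsJointPMF p) (hμ0 : ∀ u, 0 ≤ μ u) (hμ : HasSum μ 1) :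
    fstMarginal (adjoinIndep p μ) = fstMarginal p :=
  funext fun x => (hp.hasSum_adjoinIndep_row hμ0 hμ x).tsum_eq

protected lemma adjoinIndep (hp : IsJointPMF p) (hμ0 : ∀ u, 0 ≤ μ u) (hμ : HasSum μ 1) :
    IsJointPMF (adjoinIndep p μ) :=
  of_hasSum (fun x z => mul_nonneg (hp.1 x z.1) (hμ0 z.2)) (hp.hasSum_adjoinIndep_row hμ0 hμ)
    hp.hasSum_fstMarginal

lemma quantJoint_adjoinIndep (hp : IsJointPMF p) (hμ0 : ∀ u, 0 ≤ μ u) (hμ : HasSum μ 1)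
    (f : 𝒴 × 𝒰 → Fin M) :
    quantJoint (adjoinIndep p μ) f =
      fun x m => ∑' y, ∑' u, if f (y, u) = m then p x y * μ u else 0 :=
  funext₂ fun x m => ((hp.adjoinIndep hμ0 hμ).hasSum_quantJoint f x m).summable.tsum_prod

lemma hasSum_mul_quantJoint (hp : IsJointPMF p) (hμ0 : ∀ u, 0 ≤ μ u) (hμ : HasSum μ 1)
    (f : 𝒴 × 𝒰 → Fin M) (x : 𝒳) (m : Fin M) :
    HasSum (fun u => μ u * quantJoint p (fun y => f (y, u)) x m)
      (quantJoint (adjoinIndep p μ) f x m) := by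
  refine ((Equiv.prodComm 𝒰 𝒴).hasSum_iff.2
    ((hp.adjoinIndep hμ0 hμ).hasSum_quantJoint f x m)).prod_fiberwise fun u => ?_
  refine ((hp.hasSum_quantJoint (fun y => f (y, u)) x m).mul_left (μ u)).congr_fun fun y => ?_
  rw [mul_ite, mul_zero, mul_comm (μ u)]
  rfl

lemma miBits_quantJoint_le_quantMI (hp : IsJointPMF p) (g : 𝒴 → Fin M) :
    miBits (quantJoint p g) ≤ quantMI p M := by
  refine le_ciSup (f := fun g : 𝒴 → Fin M => miBits (quantJoint p g))
    ⟨∑ _m : Fin M, 1 / log 2, ?_⟩ g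
  rintro _ ⟨g, rfl⟩
  refine (hp.quantJoint g).miBits_le_entropy.trans (Finset.sum_le_sum fun m _ => ?_)
  gcongr
  exact negMulLog_le_one ((hp.quantJoint g).sndMarginal_nonneg m)

end IsJointPMF

end Quantizer

theorem randomized_quantizer_no_better_general {𝒳 𝒴 𝒰 : Type*}
    (p : 𝒳 → 𝒴 → ℝ) (hp : IsJointPMF p)
    (μ : 𝒰 → ℝ) (hμ0 : ∀ u, 0 ≤ μ u) (hμs : Summable μ) (hμ1 : (∑' u, μ u) = 1)
    (M : ℕ) (f : 𝒴 × 𝒰 → Fin M) :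
    (∃ u : 𝒰,
      miBits (fun x m => ∑' y, ∑' u', if f (y, u') = m then p x y * μ u' else 0) ≤
        miBits (quantJoint p (fun y => f (y, u)))) ∧
    miBits (fun x m => ∑' y, ∑' u', if f (y, u') = m then p x y * μ u' else 0) ≤
      quantMI p M := by
  have hμ : HasSum μ 1 := hμ1 ▸ hμs.hasSum
  have hpμ := hp.adjoinIndep hμ0 hμ
  have hK (u : 𝒰) := hp.quantJoint fun y => f (y, u)
  have hmarg (u : 𝒰) : fstMarginal (quantJoint p fun y => f (y, u)) =
      fstMarginal (quantJoint (adjoinIndep p μ) f) := by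
    rw [hp.fstMarginal_quantJoint, hpμ.fstMarginal_quantJoint, hp.fstMarginal_adjoinIndep hμ0 hμ]
  rw [← hp.quantJoint_adjoinIndep hμ0 hμ f]
  obtain ⟨u, hu⟩ := IsJointPMF.exists_miBits_le_of_mixture hμ0 hμ hK (hpμ.quantJoint f) hmarg
    (hp.hasSum_mul_quantJoint hμ0 hμ f) (fun u => (hK u).summable_mul_infoDensity)
    (hpμ.quantJoint f).summable_mul_infoDensity
  exact ⟨⟨u, hu⟩, hu.trans (hp.miBits_quantJoint_le_quantMI _)⟩

/-- Randomized quantizers cannot outperform deterministic ones: if `U` is independent of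
`(X,Y)` then there is a realization `u` with `I(X; f(Y,u)) ≥ I(X; f(Y,U))`, and
`I(X; f(Y,U)) ≤ I(X;[Y]_M)`. -/
theorem randomized_quantizer_no_better {𝒳 𝒴 𝒰 : Type*}
    [Countable 𝒳] [Countable 𝒴] [Countable 𝒰]
    (p : 𝒳 → 𝒴 → ℝ) (hp : IsJointPMF p)
    (μ : 𝒰 → ℝ) (hμ0 : ∀ u, 0 ≤ μ u) (hμs : Summable μ) (hμ1 : (∑' u, μ u) = 1)
    (M : ℕ) (hM : 0 < M) (f : 𝒴 × 𝒰 → Fin M) :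
    (∃ u : 𝒰,
      miBits (fun x m => ∑' y, ∑' u', if f (y, u') = m then p x y * μ u' else 0) ≤
        miBits (quantJoint p (fun y => f (y, u)))) ∧
    miBits (fun x m => ∑' y, ∑' u', if f (y, u') = m then p x y * μ u' else 0) ≤
      quantMI p M :=
  randomized_quantizer_no_better_general p hp μ hμ0 hμs hμ1 M f
end

section
/- Let δ ∈ [0,1], let X be uniform on {0,1,2,3}, let Z be independent of X with Pr(Z=0) = δ and Pr(Z=1) = Pr(Z=2) = Pr(Z=3) = (1-δ)/3, and let Y = (X+Z) mod 4. Then I(X;[Y]_4) = I(X;Y) = 2 - h(δ) - (1-δ)·log 3; I(X;[Y]_2) = h(1/4) - (1/4)·h(δ) - (3/4)·h((1-δ)/3) if δ ≤ 1/4 and I(X;[Y]_2) = 1 - h((1+2δ)/3) if δ > 1/4; and for every δ ∉ {1/4, 1}, 2·I(X;[Y]_2) < I(X;[Y]_4). In particular, the map M ↦ I(X;[Y]_M) does not satisfy the 'diminishing returns' inequality I(X;[Y]_{M₁M₂}) ≤ I(X;[Y]_{M₁}) + I(X;[Y]_{M₂}) in general. -/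
/-!
A four-level quantizer can be the identity, which is optimal by the data processing inequality. A
two-level quantizer is a bipartition of the alphabet, and for a uniform input to a symmetric channel
its information depends only on the sizes of the two parts, so on four letters only the splits
`1 + 3` and `2 + 2` compete.

Let `t = (1 - δ)/3` be the probability of each wrong symbol. The difference of the two splits has a
derivative in `t` that is nonnegative by AM-GM, and it vanishes at `t = 1/4`, so its sign is that of
`t - 1/4`. That either split has less than half of `I(X;Y)` is an instance of Gibbs' inequality: for
`2 + 2` the defect `I(X;Y) - 2 I(X;[Y]_2)` is the mutual information between the two bits of the
noise, viewed as an element of `{0,1}²`.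
-/

open scoped BigOperators

section

open Real Finset

/-! ### Gibbs' inequality -/

lemma mul_log_div_eq_sub (a : ℝ) {b : ℝ} (hb : b ≠ 0) :
    a * log (a / b) = a * log a - a * log b := by
  rcases eq_or_ne a 0 with rfl | ha
  · simp
  · rw [log_div ha hb, mul_sub]

lemma sub_lt_mul_log_div {a b : ℝ} (ha : 0 ≤ a) (hb : 0 < b) (hab : a ≠ b) :
    a - b < a * log (a / b) := by
  have hlog := self_sub_one_lt_mul_log (div_nonneg ha hb.le) (by rwa [Ne, div_eq_one_iff_eq hb.ne'])
  calc a - b = b * (a / b - 1) := by field_simp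
    _ < b * (a / b * log (a / b)) := by gcongr
    _ = a * log (a / b) := by field_simp

lemma sub_le_mul_log_div {a b : ℝ} (ha : 0 ≤ a) (hb : 0 < b) :
    a - b ≤ a * log (a / b) := by
  rcases eq_or_ne a b with rfl | hab
  · simp [hb.ne']
  · exact (sub_lt_mul_log_div ha hb hab).le

lemma sum_mul_log_sum_div_sum_le {ι : Type*} (s : Finset ι) {a b : ι → ℝ} (ha : ∀ i, 0 ≤ a i)
    (hb : ∀ i, 0 ≤ b i) (hab : ∀ i, b i = 0 → a i = 0) :
    (∑ i ∈ s, a i) * log ((∑ i ∈ s, a i) / ∑ i ∈ s, b i) ≤ ∑ i ∈ s, a i * log (a i / b i) := by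
  rcases (sum_nonneg fun i _ => ha i : 0 ≤ ∑ i ∈ s, a i).eq_or_lt' with hA | hA
  · have ha_zero := (sum_eq_zero_iff_of_nonneg fun i _ => ha i).1 hA
    rw [hA, zero_mul, sum_eq_zero fun i hi => by rw [ha_zero i hi, zero_mul]]
  have hB : 0 < ∑ i ∈ s, b i := by
    refine (sum_nonneg fun i _ => hb i).lt_of_ne' fun h => hA.ne' ?_
    have hb_zero := (sum_eq_zero_iff_of_nonneg fun i _ => hb i).1 h
    exact sum_eq_zero fun i hi => hab i (hb_zero i hi)
  set c := (∑ i ∈ s, a i) / ∑ i ∈ s, b i with hc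
  have hc_pos : 0 < c := div_pos hA hB
  have hterm : ∀ i, a i * log c + (a i - c * b i) ≤ a i * log (a i / b i) := by
    intro i
    rcases (ha i).eq_or_lt' with hai | hai
    · simpa [hai] using mul_nonneg hc_pos.le (hb i)
    have hbi : 0 < b i := (hb i).lt_of_ne' fun h => hai.ne' (hab i h)
    have hgibbs := sub_le_mul_log_div hai.le (mul_pos hc_pos hbi)
    rw [mul_comm c, ← div_div, log_div (by positivity) hc_pos.ne'] at hgibbs
    linarith
  calc (∑ i ∈ s, a i) * log c
      = ∑ i ∈ s, (a i * log c + (a i - c * b i)) := by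
        rw [sum_add_distrib, sum_sub_distrib, ← sum_mul, ← mul_sum, hc, div_mul_cancel₀ _ hB.ne']
        ring
    _ ≤ ∑ i ∈ s, a i * log (a i / b i) := sum_le_sum fun i _ => hterm i

/-! ### Quantizers on finite alphabets -/

variable {𝒳 𝒴 : Type*} {M : ℕ}

lemma quantJoint_const_mul (r : 𝒳 → ℝ) (W : 𝒳 → 𝒴 → ℝ) (f : 𝒴 → Fin M) :
    quantJoint (fun x y => r x * W x y) f = fun x m => r x * quantJoint W f x m := by
  ext x m
  simp only [quantJoint, ← tsum_mul_left, mul_ite, mul_zero]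

lemma quantJoint_id (p : 𝒳 → Fin M → ℝ) : quantJoint p id = p := by
  ext x m
  simp [quantJoint]

lemma quantJoint_nonneg {p : 𝒳 → 𝒴 → ℝ} (hp : ∀ x y, 0 ≤ p x y) (f : 𝒴 → Fin M) (x : 𝒳)
    (m : Fin M) : 0 ≤ quantJoint p f x m :=
  tsum_nonneg fun y => ite_nonneg (hp x y) le_rfl

lemma le_quantMI [Finite 𝒴] (p : 𝒳 → 𝒴 → ℝ) (f : 𝒴 → Fin M) :
    miBits (quantJoint p f) ≤ quantMI p M :=
  le_ciSup (f := fun f : 𝒴 → Fin M => miBits (quantJoint p f)) (Set.finite_range _).bddAbove f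

section Fintype

variable [Fintype 𝒴]

lemma quantJoint_eq_sum (p : 𝒳 → 𝒴 → ℝ) (f : 𝒴 → Fin M) (x : 𝒳) (m : Fin M) :
    quantJoint p f x m = ∑ y with f y = m, p x y := by
  rw [quantJoint, tsum_fintype, sum_filter]

lemma sum_quantJoint_right (p : 𝒳 → 𝒴 → ℝ) (f : 𝒴 → Fin M) (x : 𝒳) :
    ∑ m, quantJoint p f x m = ∑ y, p x y := by
  simp only [quantJoint_eq_sum, sum_fiberwise]

variable [Fintype 𝒳]

lemma sum_quantJoint_left (p : 𝒳 → 𝒴 → ℝ) (f : 𝒴 → Fin M) (m : Fin M) :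
    ∑ x, quantJoint p f x m = ∑ y with f y = m, ∑ x, p x y := by
  simp only [quantJoint_eq_sum]
  exact sum_comm

lemma miBits_eq_sum_div (p : 𝒳 → 𝒴 → ℝ) :
    miBits p = (∑ x, ∑ y, p x y * log (p x y / ((∑ y', p x y') * ∑ x', p x' y))) / log 2 := by
  simp only [miBits, tsum_fintype, logb, sum_div, mul_div_assoc]

end Fintype

theorem miBits_quantJoint_le [Finite 𝒳] [Finite 𝒴] {p : 𝒳 → 𝒴 → ℝ} (hp : ∀ x y, 0 ≤ p x y)
    (f : 𝒴 → Fin M) : miBits (quantJoint p f) ≤ miBits p := by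
  cases nonempty_fintype 𝒳
  cases nonempty_fintype 𝒴
  rw [miBits_eq_sum_div, miBits_eq_sum_div]
  gcongr with x
  rw [← sum_fiberwise univ f]
  gcongr with m
  rw [sum_quantJoint_right, sum_quantJoint_left, quantJoint_eq_sum, mul_sum]
  have hrow : 0 ≤ ∑ y, p x y := sum_nonneg fun y _ => hp x y
  have hcol : ∀ y, 0 ≤ ∑ x, p x y := fun y => sum_nonneg fun x _ => hp x y
  refine sum_mul_log_sum_div_sum_le _ (hp x) (fun y => mul_nonneg hrow (hcol y)) fun y h => ?_
  rcases mul_eq_zero.1 h with h | h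
  · exact (sum_eq_zero_iff_of_nonneg fun y _ => hp x y).1 h y (mem_univ y)
  · exact (sum_eq_zero_iff_of_nonneg fun x _ => hp x y).1 h x (mem_univ x)

theorem quantMI_eq_miBits [Finite 𝒳] [NeZero M] {p : 𝒳 → Fin M → ℝ} (hp : ∀ x y, 0 ≤ p x y) :
    quantMI p M = miBits p :=
  le_antisymm (ciSup_le fun f => miBits_quantJoint_le hp f)
    ((congrArg miBits (quantJoint_id p)).ge.trans (le_quantMI p id))

/-! ### Mutual information of an input law and a channel -/

variable [Fintype 𝒳] [Fintype 𝒴]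

/-- The Shannon entropy, in nats, of a probability mass function on a finite type; nats match
`Real.binEntropy` and `Real.qaryEntropy`. -/
noncomputable def shannonEntropy (w : 𝒴 → ℝ) : ℝ := ∑ y, negMulLog (w y)

lemma shannonEntropy_fin_two {w : Fin 2 → ℝ} (hw : ∑ m, w m = 1) :
    shannonEntropy w = binEntropy (w 0) := by
  rw [Fin.sum_univ_two] at hw
  rw [shannonEntropy, Fin.sum_univ_two, binEntropy_eq_negMulLog_add_negMulLog_one_sub,
    eq_sub_of_add_eq' hw]

theorem miBits_eq_shannonEntropy_sub {r : 𝒳 → ℝ} {W : 𝒳 → 𝒴 → ℝ} (hr : ∀ x, 0 ≤ r x)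
    (hW : ∀ x y, 0 ≤ W x y) (hW_sum : ∀ x, ∑ y, W x y = 1) :
    miBits (fun x y => r x * W x y) =
      (shannonEntropy (fun y => ∑ x, r x * W x y) - ∑ x, r x * shannonEntropy (W x)) / log 2 := by
  have hterm : ∀ x y, r x * W x y * log (r x * W x y / (r x * ∑ x', r x' * W x' y)) =
      r x * W x y * -log (∑ x', r x' * W x' y) - r x * negMulLog (W x y) := by
    intro x y
    rcases (hr x).eq_or_lt' with hrx | hrx
    · simp [hrx]
    rcases (hW x y).eq_or_lt' with hWxy | hWxy
    · simp [hWxy]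
    have hcol : 0 < ∑ x', r x' * W x' y :=
      sum_pos' (fun x' _ => mul_nonneg (hr x') (hW x' y)) ⟨x, mem_univ x, mul_pos hrx hWxy⟩
    rw [mul_div_mul_left _ _ hrx.ne', log_div hWxy.ne' hcol.ne', negMulLog]
    ring
  have hout : shannonEntropy (fun y => ∑ x, r x * W x y) =
      ∑ x, ∑ y, r x * W x y * -log (∑ x', r x' * W x' y) := by
    rw [sum_comm]
    exact sum_congr rfl fun y _ => by rw [negMulLog, ← sum_mul, neg_mul, mul_neg]
  rw [miBits_eq_sum_div, hout]
  simp only [← mul_sum, hW_sum, mul_one, hterm, sum_sub_distrib, shannonEntropy]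

lemma hBin_eq_binEntropy_div (s : ℝ) : hBin s = binEntropy s / log 2 := by
  rw [binEntropy_eq_negMulLog_add_negMulLog_one_sub, hBin, negMulLog, negMulLog, logb, logb]
  ring

lemma hBin_one_sub (s : ℝ) : hBin (1 - s) = hBin s := by
  simp only [hBin_eq_binEntropy_div, binEntropy_one_sub]

lemma miBits_fin_two {r : 𝒳 → ℝ} {W : 𝒳 → Fin 2 → ℝ} (hr : ∀ x, 0 ≤ r x) (hr_sum : ∑ x, r x = 1)
    (hW : ∀ x m, 0 ≤ W x m) (hW_sum : ∀ x, ∑ m, W x m = 1) :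
    miBits (fun x m => r x * W x m) = hBin (∑ x, r x * W x 0) - ∑ x, r x * hBin (W x 0) := by
  have hout : ∑ m, ∑ x, r x * W x m = 1 := by
    rw [sum_comm]
    simp only [← mul_sum, hW_sum, mul_one, hr_sum]
  rw [miBits_eq_shannonEntropy_sub hr hW hW_sum, shannonEntropy_fin_two hout]
  simp only [fun x => shannonEntropy_fin_two (hW_sum x), hBin_eq_binEntropy_div, sub_div, sum_div,
    mul_div_assoc]

end

section

open Real Finset

open Fintype (card card_ne_zero)

/-! ### The symmetric channel with uniform input -/

variable {α : Type*} [Fintype α] [DecidableEq α] {t : ℝ}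

/-- The transition probabilities of the symmetric channel on the alphabet `α`, in which each of the
`card α - 1` wrong symbols is received with probability `t`. -/
def symmetricChannel (α : Type*) [Fintype α] [DecidableEq α] (t : ℝ) (x y : α) : ℝ :=
  if y = x then 1 - (card α - 1) * t else t

/-- The joint law of the input and the output of `symmetricChannel α t` for a uniform input. -/
noncomputable def symmetricJoint (α : Type*) [Fintype α] [DecidableEq α] (t : ℝ) (x y : α) : ℝ :=
  (card α : ℝ)⁻¹ * symmetricChannel α t x y

/-- The mutual information, in bits, between a uniform symbol of an alphabet of size `n` and the
side of the partition into parts of sizes `k` and `n - k` on which the output of the symmetric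
channel falls; `t` is the probability of each wrong symbol. -/
noncomputable def bipartitionInfo (n k t : ℝ) : ℝ :=
  hBin (k / n) - k / n * hBin ((n - k) * t) - (n - k) / n * hBin (k * t)

lemma symmetricChannel_nonneg (ht : 0 ≤ t) (ht' : (card α - 1) * t ≤ 1) (x y : α) :
    0 ≤ symmetricChannel α t x y := by
  unfold symmetricChannel
  split_ifs <;> linarith

lemma symmetricJoint_nonneg (ht : 0 ≤ t) (ht' : (card α - 1) * t ≤ 1) (x y : α) :
    0 ≤ symmetricJoint α t x y :=
  mul_nonneg (by positivity) (symmetricChannel_nonneg ht ht' x y)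

lemma symmetricChannel_comm (x y : α) : symmetricChannel α t x y = symmetricChannel α t y x := by
  simp only [symmetricChannel, eq_comm]

lemma sum_symmetricChannel_eq (s : Finset α) (t : ℝ) (x : α) :
    ∑ y ∈ s, symmetricChannel α t x y = #s * t + if x ∈ s then 1 - card α * t else 0 := by
  have hsplit : ∀ y, symmetricChannel α t x y = t + if y = x then 1 - card α * t else 0 := by
    intro y
    unfold symmetricChannel
    split_ifs <;> ring
  simp only [hsplit, sum_add_distrib, sum_const, nsmul_eq_mul, sum_ite_eq']

lemma sum_symmetricChannel_univ (t : ℝ) (x : α) : ∑ y, symmetricChannel α t x y = 1 := by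
  rw [sum_symmetricChannel_eq, if_pos (mem_univ x), card_univ]
  ring

lemma shannonEntropy_symmetricChannel (t : ℝ) (x : α) :
    shannonEntropy (symmetricChannel α t x) = qaryEntropy (card α) ((card α - 1) * t) := by
  have hcard : (#(univ.erase x) : ℝ) = card α - 1 := by
    rw [cast_card_erase_of_mem (mem_univ x), card_univ]
  rw [shannonEntropy, ← add_sum_erase univ _ (mem_univ x),
    sum_congr rfl fun y hy => by rw [symmetricChannel, if_neg (ne_of_mem_erase hy)], sum_const,
    nsmul_eq_mul, hcard, symmetricChannel, if_pos rfl, qaryEntropy,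
    binEntropy_eq_negMulLog_add_negMulLog_one_sub, negMulLog_mul]
  simp only [negMulLog]
  push_cast
  ring

theorem miBits_symmetricJoint [Nonempty α] (ht : 0 ≤ t) (ht' : (card α - 1) * t ≤ 1) :
    miBits (symmetricJoint α t) =
      (log (card α) - qaryEntropy (card α) ((card α - 1) * t)) / log 2 := by
  have hcard : (card α : ℝ) ≠ 0 := Nat.cast_ne_zero.2 card_ne_zero
  have hout : ∀ y : α, ∑ x, (card α : ℝ)⁻¹ * symmetricChannel α t x y = (card α : ℝ)⁻¹ := by
    intro y
    rw [← mul_sum]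
    simp only [fun x => symmetricChannel_comm (t := t) x y, sum_symmetricChannel_univ, mul_one]
  unfold symmetricJoint
  rw [miBits_eq_shannonEntropy_sub (fun _ => by positivity) (symmetricChannel_nonneg ht ht')
    (sum_symmetricChannel_univ t)]
  simp only [hout, shannonEntropy_symmetricChannel, sum_const, card_univ, nsmul_eq_mul]
  rw [shannonEntropy, sum_const, card_univ, nsmul_eq_mul, negMulLog, log_inv]
  field_simp

theorem miBits_quantJoint_symmetricJoint [Nonempty α] (ht : 0 ≤ t) (ht' : (card α - 1) * t ≤ 1)
    (f : α → Fin 2) :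
    miBits (quantJoint (symmetricJoint α t) f) =
      bipartitionInfo (card α) (#{y | f y = 0} : ℕ) t := by
  have hcard : (card α : ℝ) ≠ 0 := Nat.cast_ne_zero.2 card_ne_zero
  have hcompl : (#{x | ¬ f x = 0} : ℝ) = card α - #{y | f y = 0} := by
    rw [eq_sub_iff_add_eq', ← Nat.cast_add, card_filter_add_card_filter_not, card_univ]
  unfold symmetricJoint
  rw [quantJoint_const_mul, miBits_fin_two (fun _ => by positivity) (by simp [hcard])
    (quantJoint_nonneg (symmetricChannel_nonneg ht ht') f)
    (fun x => by rw [sum_quantJoint_right, sum_symmetricChannel_univ])]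
  set k := ((#{y | f y = 0} : ℕ) : ℝ) with hk
  have hW : ∀ x, quantJoint (symmetricChannel α t) f x 0 =
      if f x = 0 then 1 - (card α - k) * t else k * t := by
    intro x
    rw [quantJoint_eq_sum, sum_symmetricChannel_eq, ← hk]
    simp only [mem_filter, mem_univ, true_and]
    split_ifs <;> ring
  have hout : (card α : ℝ)⁻¹ * (k * (1 - (card α - k) * t) + k * ((card α - k) * t)) =
      k / card α := by
    field_simp
    ring
  simp only [hW, apply_ite hBin, hBin_one_sub, ← mul_sum, sum_ite, sum_const, nsmul_eq_mul, hcompl,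
    ← hk, hout, bipartitionInfo]
  ring

theorem quantMI_symmetricJoint_two [Nonempty α] (ht : 0 ≤ t) (ht' : (card α - 1) * t ≤ 1) :
    quantMI (symmetricJoint α t) 2 = (range (card α + 1)).sup' nonempty_range_add_one
      fun k => bipartitionInfo (card α) k t := by
  refine le_antisymm (ciSup_le fun f => ?_) (sup'_le _ _ fun k hk => ?_)
  · rw [miBits_quantJoint_symmetricJoint ht ht']
    exact le_sup' (fun k : ℕ => bipartitionInfo (card α) k t)
      (mem_range_succ_iff.2 (card_le_univ _))
  · obtain ⟨s, -, rfl⟩ := exists_subset_card_eq (s := (univ : Finset α)) (mem_range_succ_iff.1 hk)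
    have hs : ({y | (if y ∈ s then 0 else 1 : Fin 2) = 0} : Finset α) = s := by
      ext y
      simp
    have hle := le_quantMI (symmetricJoint α t) fun y => if y ∈ s then (0 : Fin 2) else 1
    rwa [miBits_quantJoint_symmetricJoint ht ht', hs] at hle

/-! ### Bipartitions of a four-letter alphabet -/

lemma bipartitionInfo_zero (n t : ℝ) : bipartitionInfo n 0 t = 0 := by
  simp [bipartitionInfo, hBin]

lemma bipartitionInfo_sub {n : ℝ} (hn : n ≠ 0) (k t : ℝ) :
    bipartitionInfo n (n - k) t = bipartitionInfo n k t := by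
  rw [bipartitionInfo, bipartitionInfo, sub_sub_cancel, sub_div, div_self hn, hBin_one_sub]
  ring

lemma bipartitionInfo_four_one (t : ℝ) :
    bipartitionInfo 4 1 t = hBin (1 / 4) - 1 / 4 * hBin (3 * t) - 3 / 4 * hBin t := by
  norm_num [bipartitionInfo]

lemma bipartitionInfo_four_two (t : ℝ) : bipartitionInfo 4 2 t = 1 - hBin (2 * t) := by
  have hhalf : hBin (2 / 4) = 1 := by
    rw [hBin_eq_binEntropy_div, show (2 / 4 : ℝ) = 2⁻¹ by norm_num, binEntropy_two_inv,
      div_self (log_pos one_lt_two).ne']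
  rw [bipartitionInfo, hhalf, show (4 - 2 : ℝ) = 2 by norm_num]
  ring

lemma bipartitionInfo_four_two_nonneg (t : ℝ) : 0 ≤ bipartitionInfo 4 2 t := by
  rw [bipartitionInfo_four_two, hBin_eq_binEntropy_div, sub_nonneg]
  exact div_le_one_of_le₀ binEntropy_le_log_two (log_nonneg one_le_two)

theorem quantMI_symmetricJoint_fin_four_two (h0 : 0 ≤ t) (h1 : t ≤ 1 / 3) :
    quantMI (symmetricJoint (Fin 4) t) 2 = max (bipartitionInfo 4 1 t) (bipartitionInfo 4 2 t) := by
  have hcard : (card (Fin 4) : ℝ) = 4 := by simp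
  rw [quantMI_symmetricJoint_two h0 (by rw [hcard]; linarith), hcard]
  refine le_antisymm (sup'_le _ _ fun k hk => ?_) (max_le ?_ ?_)
  · have hcompl := bipartitionInfo_sub (four_ne_zero' ℝ) (t := t)
    have hzero := bipartitionInfo_zero 4 t
    have hnonneg := bipartitionInfo_four_two_nonneg t
    have hthree : bipartitionInfo 4 3 t = bipartitionInfo 4 1 t := by
      rw [← hcompl]
      norm_num
    have hfour : bipartitionInfo 4 4 t = 0 := by simpa [hzero] using hcompl 0
    rw [mem_range, Fintype.card_fin] at hk
    interval_cases k <;> simp [hzero, hthree, hfour, hnonneg]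
  · exact_mod_cast le_sup' (fun k : ℕ => bipartitionInfo 4 k t) (by simp : 1 ∈ range _)
  · exact_mod_cast le_sup' (fun k : ℕ => bipartitionInfo 4 k t) (by simp : 2 ∈ range _)

/-! ### Comparison of the quantizers -/

lemma log_four_eq_two_mul_log_two : log 4 = 2 * log 2 := by
  rw [show (4 : ℝ) = 2 ^ 2 by norm_num, log_pow]
  norm_cast

lemma binEntropy_one_fourth : binEntropy (1 / 4) = 2 * log 2 - 3 / 4 * log 3 := by
  rw [binEntropy, show (1 - 1 / 4 : ℝ) = 3 / 4 by norm_num, log_inv, log_inv, one_div, log_inv,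
    log_div three_ne_zero four_ne_zero, log_four_eq_two_mul_log_two]
  ring

/-- AM-GM with weights `3, 2, 3` for `2(1 - 3t)`, `2t`, `2(1 - t)/3`, whose weighted sum is
`8(1 - 2t)`; all three equal `1/2` at `t = 1/4`. -/
lemma three_mul_log_add_two_mul_log_add_le (h0 : 0 < t) (h1 : t < 1 / 3) :
    3 * log (1 - 3 * t) + 2 * log t + 3 * log (1 - t) + 8 * log 2 ≤
      8 * log (1 - 2 * t) + 3 * log 3 := by
  have hu : 0 < 1 - 3 * t := by linarith
  have hv : 0 < 1 - t := by linarith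
  have hw : 0 < 1 - 2 * t := by linarith
  have hu_le := log_le_sub_one_of_pos (show 0 < 2 * (1 - 3 * t) / (1 - 2 * t) by positivity)
  have ht_le := log_le_sub_one_of_pos (show 0 < 2 * t / (1 - 2 * t) by positivity)
  have hv_le := log_le_sub_one_of_pos (show 0 < 2 * (1 - t) / (3 * (1 - 2 * t)) by positivity)
  rw [log_div (by positivity) hw.ne', log_mul two_ne_zero hu.ne'] at hu_le
  rw [log_div (by positivity) hw.ne', log_mul two_ne_zero h0.ne'] at ht_le
  rw [log_div (by positivity) (by positivity), log_mul two_ne_zero hv.ne',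
    log_mul three_ne_zero hw.ne'] at hv_le
  have hsum : 3 * (2 * (1 - 3 * t) / (1 - 2 * t)) + 2 * (2 * t / (1 - 2 * t)) +
      3 * (2 * (1 - t) / (3 * (1 - 2 * t))) = 8 := by
    field_simp
    ring
  linarith

lemma monotoneOn_four_mul_binEntropy_sub :
    MonotoneOn (fun t => 4 * binEntropy (2 * t) - binEntropy (3 * t) - 3 * binEntropy t)
      (Set.Icc 0 (1 / 3)) := by
  have hderiv : ∀ t ∈ Set.Ioo (0 : ℝ) (1 / 3),
      HasDerivAt (fun t => 4 * binEntropy (2 * t) - binEntropy (3 * t) - 3 * binEntropy t)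
        (8 * (log (1 - 2 * t) - log (2 * t)) - 3 * (log (1 - 3 * t) - log (3 * t))
          - 3 * (log (1 - t) - log t)) t := by
    rintro t ⟨h0, h1⟩
    have hmul : ∀ c, 0 < c → c ≤ 3 →
        HasDerivAt (fun t => binEntropy (c * t)) (c * (log (1 - c * t) - log (c * t))) t := by
      intro c hc hc3
      have hct : c * t < 1 := by nlinarith
      simpa [mul_comm c, Function.comp_def] using
        (hasDerivAt_binEntropy (by positivity) hct.ne).comp t ((hasDerivAt_id t).const_mul c)
    have h := (((hmul 2 (by norm_num) (by norm_num)).const_mul 4).sub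
      (hmul 3 (by norm_num) le_rfl)).sub
      ((hasDerivAt_binEntropy h0.ne' (by linarith)).const_mul 3)
    exact h.congr_deriv (by ring)
  refine monotoneOn_of_deriv_nonneg (convex_Icc _ _) (by fun_prop) ?_ ?_ <;> rw [interior_Icc]
  · exact fun t ht => (hderiv t ht).differentiableAt.differentiableWithinAt
  · intro t ht
    rw [(hderiv t ht).deriv, log_mul two_ne_zero ht.1.ne', log_mul three_ne_zero ht.1.ne']
    linarith [three_mul_log_add_two_mul_log_add_le ht.1 ht.2]

lemma bipartitionInfo_four_one_sub_two (t : ℝ) :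
    bipartitionInfo 4 1 t - bipartitionInfo 4 2 t =
      ((4 * binEntropy (2 * t) - binEntropy (3 * t) - 3 * binEntropy t) -
        (4 * binEntropy (2 * (1 / 4)) - binEntropy (3 * (1 / 4)) - 3 * binEntropy (1 / 4))) /
        (4 * log 2) := by
  have hthree : binEntropy (3 * (1 / 4)) = binEntropy (1 / 4) := by
    rw [← binEntropy_one_sub]
    norm_num
  rw [bipartitionInfo_four_one, bipartitionInfo_four_two, hthree,
    show (2 * (1 / 4) : ℝ) = 2⁻¹ by norm_num, binEntropy_two_inv]
  simp only [hBin_eq_binEntropy_div]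
  field_simp
  ring

lemma bipartitionInfo_four_two_le_one (h0 : 1 / 4 ≤ t) (h1 : t ≤ 1 / 3) :
    bipartitionInfo 4 2 t ≤ bipartitionInfo 4 1 t := by
  rw [← sub_nonneg, bipartitionInfo_four_one_sub_two]
  exact div_nonneg (sub_nonneg.2 (monotoneOn_four_mul_binEntropy_sub (by norm_num)
    ⟨by linarith, h1⟩ h0)) (by positivity)

lemma bipartitionInfo_four_one_le_two (h0 : 0 ≤ t) (h1 : t ≤ 1 / 4) :
    bipartitionInfo 4 1 t ≤ bipartitionInfo 4 2 t := by
  rw [← sub_nonpos, bipartitionInfo_four_one_sub_two]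
  exact div_nonpos_of_nonpos_of_nonneg (sub_nonpos.2 (monotoneOn_four_mul_binEntropy_sub
    ⟨h0, by linarith⟩ (by norm_num) h1)) (by positivity)

lemma qaryEntropy_four (s : ℝ) : qaryEntropy 4 s = s * log 3 + binEntropy s := by
  norm_num [qaryEntropy]

/-- Gibbs' inequality for the weights `1 - 3t, 2` against `(1 - t)/3, 8(1 - t)/3`, chosen
proportional to the former at `t = 1/4`. -/
lemma two_mul_qaryEntropy_four_add_lt (h1 : t ≤ 1 / 3) (ht : t ≠ 1 / 4) :
    2 * qaryEntropy 4 (3 * t) + 4 * binEntropy (1 / 4) <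
      4 * log 2 + binEntropy (3 * t) + 3 * binEntropy t := by
  have hv : 0 < 1 - t := by linarith
  have hu_lt := sub_lt_mul_log_div (a := 1 - 3 * t) (b := (1 - t) / 3) (by linarith)
    (by positivity) fun h => ht (by linarith)
  have htwo_le := sub_le_mul_log_div (a := 2) (b := 8 * (1 - t) / 3) two_pos.le (by positivity)
  have hlog : log 8 = 3 * log 2 := by
    rw [show (8 : ℝ) = 2 ^ 3 by norm_num, log_pow]
    norm_cast
  rw [mul_log_div_eq_sub _ (by positivity), log_div hv.ne' three_ne_zero] at hu_lt
  rw [mul_log_div_eq_sub _ (by positivity), log_div (by positivity) three_ne_zero,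
    log_mul (by norm_num) hv.ne', hlog] at htwo_le
  rw [qaryEntropy_four, binEntropy_one_fourth]
  simp only [binEntropy_eq_negMulLog_add_negMulLog_one_sub, negMulLog_mul]
  simp only [negMulLog]
  linarith

/-- Identify the four noise values with pairs of bits. Each bit of the noise is set with probability
`2t`, so this is strict subadditivity of entropy, with equality only for independent bits. -/
lemma qaryEntropy_four_lt_two_mul_binEntropy (h0 : 0 < t) (h1 : t ≤ 1 / 3) (ht : t ≠ 1 / 4) :
    qaryEntropy 4 (3 * t) < 2 * binEntropy (2 * t) := by
  have hw : 0 < 1 - 2 * t := by linarith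
  have hnn := sub_lt_mul_log_div (a := 1 - 3 * t) (b := (1 - 2 * t) * (1 - 2 * t)) (by linarith)
    (by positivity) fun h => ht (mul_left_cancel₀ h0.ne' (by linarith))
  have hny := sub_le_mul_log_div (a := t) (b := 2 * t * (1 - 2 * t)) h0.le (by positivity)
  have hyy := sub_le_mul_log_div (a := t) (b := 2 * t * (2 * t)) h0.le (by positivity)
  rw [mul_log_div_eq_sub _ (by positivity), log_mul (by positivity) (by positivity)] at hnn hny hyy
  rw [qaryEntropy_four]
  simp only [binEntropy_eq_negMulLog_add_negMulLog_one_sub, negMulLog_mul 3]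
  simp only [negMulLog]
  linarith

theorem miBits_symmetricJoint_fin_four (h0 : 0 ≤ t) (h1 : t ≤ 1 / 3) :
    miBits (symmetricJoint (Fin 4) t) = 2 - qaryEntropy 4 (3 * t) / log 2 := by
  rw [miBits_symmetricJoint h0 (by norm_num; linarith), Fintype.card_fin, Nat.cast_ofNat,
    log_four_eq_two_mul_log_two,
    show (4 - 1 : ℝ) = 3 by norm_num]
  field_simp

lemma two_mul_bipartitionInfo_four_one_lt (h0 : 0 ≤ t) (h1 : t ≤ 1 / 3) (ht : t ≠ 1 / 4) :
    2 * bipartitionInfo 4 1 t < miBits (symmetricJoint (Fin 4) t) := by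
  rw [miBits_symmetricJoint_fin_four h0 h1, bipartitionInfo_four_one]
  simp only [hBin_eq_binEntropy_div]
  field_simp
  linarith [two_mul_qaryEntropy_four_add_lt h1 ht]

lemma two_mul_bipartitionInfo_four_two_lt (h0 : 0 < t) (h1 : t ≤ 1 / 3) (ht : t ≠ 1 / 4) :
    2 * bipartitionInfo 4 2 t < miBits (symmetricJoint (Fin 4) t) := by
  rw [miBits_symmetricJoint_fin_four h0.le h1, bipartitionInfo_four_two, hBin_eq_binEntropy_div]
  rw [mul_sub, mul_one, sub_lt_sub_iff_left, ← mul_div_assoc]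
  gcongr
  exact qaryEntropy_four_lt_two_mul_binEntropy h0 h1 ht

theorem two_mul_quantMI_two_lt_miBits (h0 : 0 < t) (h1 : t ≤ 1 / 3) (ht : t ≠ 1 / 4) :
    2 * quantMI (symmetricJoint (Fin 4) t) 2 < miBits (symmetricJoint (Fin 4) t) := by
  rw [quantMI_symmetricJoint_fin_four_two h0.le h1, mul_max_of_nonneg _ _ two_pos.le]
  exact max_lt (two_mul_bipartitionInfo_four_one_lt h0.le h1 ht)
    (two_mul_bipartitionInfo_four_two_lt h0 h1 ht)

end

/-- Remark 1: the example `X ~ Uniform{0,1,2,3}`, `Y = (X + Z) mod 4`, showing that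
`I(X;[Y]_M)` does not have diminishing returns: `2 I(X;[Y]_2) < I(X;[Y]_4)` for all
`δ ∉ {1/4, 1}`. -/
theorem no_diminishing_returns (δ : ℝ) (h0 : 0 ≤ δ) (h1 : δ ≤ 1) :
    let PZ : Fin 4 → ℝ := fun z => if z = 0 then δ else (1 - δ) / 3
    let p : Fin 4 → Fin 4 → ℝ := fun x y => (1 / 4) * PZ (y - x)
    quantMI p 4 = miBits p ∧
    miBits p = 2 - hBin δ - (1 - δ) * Real.logb 2 3 ∧
    (δ ≤ 1 / 4 →
      quantMI p 2 = hBin (1 / 4) - (1 / 4) * hBin δ - (3 / 4) * hBin ((1 - δ) / 3)) ∧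
    (1 / 4 < δ → quantMI p 2 = 1 - hBin ((1 + 2 * δ) / 3)) ∧
    (δ ≠ 1 / 4 → δ ≠ 1 → 2 * quantMI p 2 < quantMI p 4) := by
  intro PZ p
  obtain ⟨t, rfl⟩ : ∃ t, δ = 1 - 3 * t := ⟨(1 - δ) / 3, by ring⟩
  have ht0 : 0 ≤ t := by linarith
  have ht1 : t ≤ 1 / 3 := by linarith
  have hp : p = symmetricJoint (Fin 4) t := by
    ext x y
    norm_num [p, PZ, symmetricJoint, symmetricChannel, sub_eq_zero]
  have hfour : quantMI p 4 = miBits p := quantMI_eq_miBits <| by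
    rw [hp]
    exact symmetricJoint_nonneg ht0 (by norm_num; linarith)
  rw [hfour, hp, hBin_one_sub, sub_sub_cancel, mul_div_cancel_left₀ _ three_ne_zero]
  refine ⟨rfl, ?_, fun h => ?_, fun h => ?_, fun h h' => ?_⟩
  · rw [miBits_symmetricJoint_fin_four ht0 ht1, qaryEntropy_four, hBin_eq_binEntropy_div,
      Real.logb]
    ring
  · rw [quantMI_symmetricJoint_fin_four_two ht0 ht1,
      max_eq_left (bipartitionInfo_four_two_le_one (by linarith) ht1), bipartitionInfo_four_one]
  · rw [quantMI_symmetricJoint_fin_four_two ht0 ht1,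
      max_eq_right (bipartitionInfo_four_one_le_two ht0 (by linarith)), bipartitionInfo_four_two,
      ← hBin_one_sub]
    ring_nf
  · exact two_mul_quantMI_two_lt_miBits (ht0.lt_of_ne' fun h₀ => h' (by linarith)) ht1
      fun ht => h (by linarith)
end
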